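/- arXiv:1405.6650 — 2 statements merged into one kernel-verified Lean document; each statement's English description precedes it below -/
import Mathlib

section
/- (Sinkhorn) Let Π = [π_{ij}] be an N×N stochastic matrix with strictly positive entries. Then there exist vectors φ_0, φ_T ∈ ℝ^N with strictly positive entries such that the matrix Π° with entries π°_{ij} = π_{ij}·φ_T(j)/φ_0(i) is doubly stochastic, i.e. Σ_j π°_{ij} = 1 for all i and Σ_i π°_{ij} = 1 for all j. Moreover Π° is the unique doubly stochastic matrix of this form: if ψ_0, ψ_T are strictly positive vectors such that [π_{ij}·ψ_T(j)/ψ_0(i)] is doubly stochastic, then π_{ij}·ψ_T(j)/ψ_0(i) = π°_{ij} for all i, j. -/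
open scoped BigOperators

/-!
For a positive matrix `A` and positive marginals `r`, `c` with the same total mass, the function
`y ↦ ∑ⱼ cⱼ log yⱼ - ∑ᵢ rᵢ log (A y)ᵢ` is invariant under `y ↦ t y` and tends to `-∞` at the boundary
of the simplex, so it attains a maximum `x` on the positive orthant. Criticality of `x` says that
`Aᵢⱼ xⱼ rᵢ / (A x)ᵢ` has column sums `c`; its row sums are `r` by construction.

If `M` and `Mᵢⱼ vⱼ / uᵢ` have the same marginals, then pairing their difference with `vⱼ - uᵢ`
gives `∑ᵢⱼ Mᵢⱼ (vⱼ - uᵢ)² / uᵢ = 0`, so the two matrices coincide.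
-/

open Finset Matrix
open scoped Topology

section Scaling

variable {m n 𝕜 : Type*} [Fintype n]

theorem mulVec_apply_pos [Semiring 𝕜] [PartialOrder 𝕜] [IsStrictOrderedRing 𝕜] {A : Matrix m n 𝕜}
    {y : n → 𝕜} (hA : ∀ i j, 0 < A i j) (hy : 0 < y) (i : m) : 0 < (A *ᵥ y) i := by
  obtain ⟨y_nonneg, j, hj⟩ := Pi.lt_def.1 hy
  exact sum_pos' (fun k _ => mul_nonneg (hA i k).le (y_nonneg k))
    ⟨j, mem_univ j, mul_pos (hA i j) hj⟩

theorem pos_of_mem_stdSimplex [Semiring 𝕜] [PartialOrder 𝕜] [Nontrivial 𝕜] {y : n → 𝕜}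
    (hy : y ∈ stdSimplex 𝕜 n) : 0 < y :=
  lt_of_le_of_ne' hy.1 fun h => zero_ne_one (α := 𝕜) (by simpa [h] using hy.2)

variable [Fintype m]

/-- The logarithm of `∏ⱼ yⱼ ^ cⱼ / ∏ᵢ (A y)ᵢ ^ rᵢ`. Its critical points in the positive orthant are
the column factors of the scalings of `A` with row sums `r` and column sums `c`. -/
noncomputable def scalingPotential (A : Matrix m n ℝ) (r : m → ℝ) (c : n → ℝ) (y : n → ℝ) : ℝ :=
  ∑ j, c j * Real.log (y j) - ∑ i, r i * Real.log ((A *ᵥ y) i)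

namespace scalingPotential

variable {A : Matrix m n ℝ} {r : m → ℝ} {c : n → ℝ}

theorem smul_eq {t : ℝ} {y : n → ℝ} (hrc : ∑ i, r i = ∑ j, c j) (ht : t ≠ 0)
    (hy : ∀ j, y j ≠ 0) (hAy : ∀ i, (A *ᵥ y) i ≠ 0) :
    scalingPotential A r c (t • y) = scalingPotential A r c y := by
  simp only [scalingPotential, mulVec_smul, Pi.smul_apply, smul_eq_mul, Real.log_mul ht (hy _),
    Real.log_mul ht (hAy _), mul_add, sum_add_distrib, ← sum_mul, hrc]
  ring

theorem hasLineDerivAt {x : n → ℝ} (hx : ∀ j, x j ≠ 0) (hAx : ∀ i, (A *ᵥ x) i ≠ 0) (v : n → ℝ) :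
    HasLineDerivAt ℝ (scalingPotential A r c)
      (∑ j, c j * (v j / x j) - ∑ i, r i * ((A *ᵥ v) i / (A *ᵥ x) i)) x v := by
  have hasDerivAt_log {a : ℝ} (ha : a ≠ 0) (b : ℝ) :
      HasDerivAt (fun t : ℝ => Real.log (a + t * b)) (b / a) 0 := by
    simpa using (((hasDerivAt_id (0 : ℝ)).mul_const b).const_add a).log (by simpa using ha)
  simp only [HasLineDerivAt, scalingPotential, mulVec_add, mulVec_smul, Pi.add_apply,
    Pi.smul_apply, smul_eq_mul]
  exact (HasDerivAt.fun_sum fun j _ => (hasDerivAt_log (hx j) (v j)).const_mul (c j)).sub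
    (HasDerivAt.fun_sum fun i _ => (hasDerivAt_log (hAx i) ((A *ᵥ v) i)).const_mul (r i))

theorem exists_isMaxOn_stdSimplex [Nonempty n] (hA : ∀ i j, 0 < A i j) (hc : ∀ j, 0 < c j) :
    ∃ x ∈ stdSimplex ℝ n, (∀ j, 0 < x j) ∧
      IsMaxOn (scalingPotential A r c) {y ∈ stdSimplex ℝ n | ∀ j, 0 < y j} x := by
  -- `exp ∘ scalingPotential` extends continuously by `0` to the boundary of the simplex.
  let F : (n → ℝ) → ℝ := fun y =>
    (∏ j, y j ^ c j) * Real.exp (-∑ i, r i * Real.log ((A *ᵥ y) i))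
  have F_eq_exp {y : n → ℝ} (hy : ∀ j, 0 < y j) : F y = Real.exp (scalingPotential A r c y) := by
    simp only [F, scalingPotential, Real.rpow_def_of_pos (hy _), ← Real.exp_sum, ← Real.exp_add,
      sub_eq_add_neg, mul_comm (Real.log (y _))]
  have F_cont : ContinuousOn F (stdSimplex ℝ n) := by
    refine ContinuousOn.mul ?_ (ContinuousOn.rexp (ContinuousOn.neg ?_))
    · exact continuousOn_finsetProd _ fun j _ =>
        ((continuous_apply j).rpow_const fun _ => .inr (hc j).le).continuousOn
    · refine continuousOn_finsetSum _ fun i _ => continuousOn_const.mul (ContinuousOn.log ?_ ?_)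
      · exact (continuous_apply i).comp_continuousOn
          (continuous_const.matrix_mulVec continuous_id).continuousOn
      · exact fun y hy => (mulVec_apply_pos hA (pos_of_mem_stdSimplex hy) i).ne'
  let z : n → ℝ := fun _ => (Fintype.card n : ℝ)⁻¹
  have z_pos (j : n) : 0 < z j := by positivity
  have z_mem : z ∈ stdSimplex ℝ n := ⟨fun j => (z_pos j).le, by simp [z]⟩
  obtain ⟨x, x_mem, x_max⟩ := (isCompact_stdSimplex ℝ n).exists_isMaxOn ⟨z, z_mem⟩ F_cont
  have F_pos : 0 < F x := (F_eq_exp z_pos ▸ Real.exp_pos _).trans_le (x_max z_mem)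
  have x_pos (j : n) : 0 < x j := by
    refine (x_mem.1 j).lt_of_ne' fun hj => F_pos.ne' ?_
    have factor_zero : x j ^ c j = 0 := by rw [hj, Real.zero_rpow (hc j).ne']
    exact mul_eq_zero_of_left (prod_eq_zero (mem_univ j) factor_zero) _
  refine ⟨x, x_mem, x_pos, fun y ⟨y_mem, y_pos⟩ => ?_⟩
  change scalingPotential A r c y ≤ scalingPotential A r c x
  rw [← Real.exp_le_exp, ← F_eq_exp y_pos, ← F_eq_exp x_pos]
  exact x_max y_mem

theorem exists_isMaxOn_pos [Nonempty n] (hA : ∀ i j, 0 < A i j) (hc : ∀ j, 0 < c j)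
    (hrc : ∑ i, r i = ∑ j, c j) :
    ∃ x : n → ℝ, (∀ j, 0 < x j) ∧ IsMaxOn (scalingPotential A r c) {y | ∀ j, 0 < y j} x := by
  obtain ⟨x, -, x_pos, x_max⟩ := exists_isMaxOn_stdSimplex (r := r) hA hc
  refine ⟨x, x_pos, fun y (y_pos : ∀ j, 0 < y j) => ?_⟩
  have sum_y_pos : 0 < ∑ j, y j := sum_pos (fun j _ => y_pos j) univ_nonempty
  have normalized_pos (j : n) : 0 < ((∑ j, y j)⁻¹ • y) j := mul_pos (inv_pos.2 sum_y_pos) (y_pos j)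
  have normalized_mem : (∑ j, y j)⁻¹ • y ∈ stdSimplex ℝ n :=
    ⟨fun j => (normalized_pos j).le, by simp [← mul_sum, sum_y_pos.ne']⟩
  calc scalingPotential A r c y = scalingPotential A r c ((∑ j, y j)⁻¹ • y) :=
        (smul_eq hrc (inv_ne_zero sum_y_pos.ne') (fun j => (y_pos j).ne')
          fun i => (mulVec_apply_pos hA (lt_of_strongLT y_pos) i).ne').symm
    _ ≤ scalingPotential A r c x := x_max ⟨normalized_mem, normalized_pos⟩

theorem sum_div_mulVec_eq_of_isMaxOn {x : n → ℝ} (hx : ∀ j, 0 < x j)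
    (hAx : ∀ i, (A *ᵥ x) i ≠ 0) (hmax : IsMaxOn (scalingPotential A r c) {y | ∀ j, 0 < y j} x)
    (j : n) : ∑ i, r i * (A i j / (A *ᵥ x) i) = c j / x j := by
  classical
  have stays_pos : ∀ᶠ t : ℝ in 𝓝 0, x + t • Pi.single j 1 ∈ {y : n → ℝ | ∀ k, 0 < y k} := by
    have cont : Continuous fun t : ℝ => x + t • (Pi.single j 1 : n → ℝ) := by fun_prop
    exact Filter.eventually_all.2 fun k => ((continuous_apply k).comp cont).continuousAt.eventually
      (lt_mem_nhds (by simpa using hx k))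
  have critical :=
    hmax.hasLineDerivAt_eq_zero (hasLineDerivAt (fun k => (hx k).ne') hAx _) stays_pos
  symm
  simpa [Pi.single_apply, ite_div, sub_eq_zero, div_eq_mul_inv] using critical

end scalingPotential

theorem exists_pos_scaling_of_marginals {A : Matrix m n ℝ} {r : m → ℝ} {c : n → ℝ}
    (hA : ∀ i j, 0 < A i j) (hr : ∀ i, 0 < r i) (hc : ∀ j, 0 < c j) (hrc : ∑ i, r i = ∑ j, c j) :
    ∃ (u : m → ℝ) (v : n → ℝ), (∀ i, 0 < u i) ∧ (∀ j, 0 < v j) ∧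
      (∀ i, ∑ j, A i j * v j / u i = r i) ∧ (∀ j, ∑ i, A i j * v j / u i = c j) := by
  rcases isEmpty_or_nonempty n with hn | hn
  · have hm : IsEmpty m := by
      by_contra! hm
      exact (sum_pos (fun i _ => hr i) univ_nonempty).ne' (by simpa using hrc)
    exact ⟨1, 1, hm.elim, hn.elim, hm.elim, hn.elim⟩
  obtain ⟨x, hx, hmax⟩ := scalingPotential.exists_isMaxOn_pos hA hc hrc
  have hAx := mulVec_apply_pos hA (lt_of_strongLT hx)
  refine ⟨fun i => (A *ᵥ x) i / r i, x, fun i => div_pos (hAx i) (hr i), hx, fun i => ?_,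
    fun j => ?_⟩
  · calc ∑ j, A i j * x j / ((A *ᵥ x) i / r i)
        = (A *ᵥ x) i / ((A *ᵥ x) i / r i) := (sum_div ..).symm
      _ = r i := div_div_cancel₀ (hAx i).ne'
  · calc ∑ i, A i j * x j / ((A *ᵥ x) i / r i)
        = (∑ i, r i * (A i j / (A *ᵥ x) i)) * x j := by
          rw [sum_mul]
          exact sum_congr rfl fun i _ => by rw [div_div_eq_mul_div]; ring
      _ = c j := by
          rw [scalingPotential.sum_div_mulVec_eq_of_isMaxOn hx (fun i => (hAx i).ne') hmax,
            div_mul_cancel₀ _ (hx j).ne']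

variable [Field 𝕜] [LinearOrder 𝕜] [IsStrictOrderedRing 𝕜]

theorem scaling_eq_self_of_marginals_eq {M : Matrix m n 𝕜} {u : m → 𝕜} {v : n → 𝕜}
    (hM : ∀ i j, 0 ≤ M i j) (hu : ∀ i, 0 < u i)
    (hrow : ∀ i, ∑ j, M i j * v j / u i = ∑ j, M i j)
    (hcol : ∀ j, ∑ i, M i j * v j / u i = ∑ i, M i j) (i : m) (j : n) :
    M i j * v j / u i = M i j := by
  let D : m → n → 𝕜 := fun i j => M i j * v j / u i - M i j
  have D_row (i : m) : ∑ j, D i j = 0 := by simp only [D, sum_sub_distrib, hrow, sub_self]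
  have D_col (j : n) : ∑ i, D i j = 0 := by simp only [D, sum_sub_distrib, hcol, sub_self]
  have D_mul (i : m) (j : n) : D i j * (v j - u i) = M i j * (v j - u i) ^ 2 / u i := by
    have := (hu i).ne'
    simp only [D]
    field_simp
  have D_mul_nonneg (i : m) (j : n) : 0 ≤ D i j * (v j - u i) :=
    D_mul i j ▸ div_nonneg (mul_nonneg (hM i j) (sq_nonneg _)) (hu i).le
  have sum_D_mul : ∑ i, ∑ j, D i j * (v j - u i) = 0 := by
    simp only [mul_sub, sum_sub_distrib]
    rw [sum_comm]
    simp only [← sum_mul, D_row, D_col, zero_mul, sum_const_zero, sub_self]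
  have D_mul_eq_zero : D i j * (v j - u i) = 0 := by
    have := (Fintype.sum_eq_zero_iff_of_nonneg fun i => sum_nonneg fun j _ => D_mul_nonneg i j).1
      sum_D_mul
    exact congrFun ((Fintype.sum_eq_zero_iff_of_nonneg (D_mul_nonneg i)).1 (congrFun this i)) j
  rcases mul_eq_zero.1 D_mul_eq_zero with hD | hvu
  · exact sub_eq_zero.1 hD
  · rw [sub_eq_zero.1 hvu, mul_div_cancel_right₀ _ (hu i).ne']

theorem scaling_eq_scaling_of_marginals_eq {A : Matrix m n 𝕜} {u u' : m → 𝕜} {v v' : n → 𝕜}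
    (hA : ∀ i j, 0 ≤ A i j) (hu : ∀ i, 0 < u i) (hv : ∀ j, 0 < v j) (hu' : ∀ i, 0 < u' i)
    (hrow : ∀ i, ∑ j, A i j * v' j / u' i = ∑ j, A i j * v j / u i)
    (hcol : ∀ j, ∑ i, A i j * v' j / u' i = ∑ i, A i j * v j / u i) (i : m) (j : n) :
    A i j * v' j / u' i = A i j * v j / u i := by
  let M : Matrix m n 𝕜 := fun i j => A i j * v j / u i
  have rescale (i : m) (j : n) : M i j * (v' j / v j) / (u' i / u i) = A i j * v' j / u' i := by
    have := (hu i).ne'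
    have := (hv j).ne'
    have := (hu' i).ne'
    simp only [M]
    field_simp
  rw [← rescale]
  refine scaling_eq_self_of_marginals_eq (M := M) (v := fun j => v' j / v j)
    (fun i j => div_nonneg (mul_nonneg (hA i j) (hv j).le) (hu i).le)
    (fun i => div_pos (hu' i) (hu i)) (fun i => ?_) (fun j => ?_) i j
  · simpa only [rescale] using hrow i
  · simpa only [rescale] using hcol j

theorem sinkhorn_general (A : Matrix m n ℝ) (r : m → ℝ) (c : n → ℝ)
    (hA : ∀ i j, 0 < A i j) (hr : ∀ i, 0 < r i) (hc : ∀ j, 0 < c j) (hrc : ∑ i, r i = ∑ j, c j) :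
    ∃ (u : m → ℝ) (v : n → ℝ), (∀ i, 0 < u i) ∧ (∀ j, 0 < v j) ∧
      (∀ i, ∑ j, A i j * v j / u i = r i) ∧
      (∀ j, ∑ i, A i j * v j / u i = c j) ∧
      (∀ (u' : m → ℝ) (v' : n → ℝ), (∀ i, 0 < u' i) →
        (∀ i, ∑ j, A i j * v' j / u' i = r i) →
        (∀ j, ∑ i, A i j * v' j / u' i = c j) →
        ∀ i j, A i j * v' j / u' i = A i j * v j / u i) := by
  obtain ⟨u, v, hu, hv, hrow, hcol⟩ := exists_pos_scaling_of_marginals hA hr hc hrc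
  exact ⟨u, v, hu, hv, hrow, hcol, fun u' v' hu' hrow' hcol' =>
    scaling_eq_scaling_of_marginals_eq (fun i j => (hA i j).le) hu hv hu'
      (fun i => (hrow' i).trans (hrow i).symm) fun j => (hcol' j).trans (hcol j).symm⟩

end Scaling

/-- (Sinkhorn) Every `N×N` stochastic matrix with strictly positive entries can be transformed
into a doubly stochastic matrix by a multiplicative transformation
`π°_{ij} = π_{ij}·φ_T(j)/φ_0(i)` with strictly positive vectors `φ_0`, `φ_T`; moreover the
resulting doubly stochastic matrix is unique among matrices of this form. -/
theorem sinkhorn {N : ℕ} (Pm : Matrix (Fin N) (Fin N) ℝ)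
    (hpos : ∀ i j, 0 < Pm i j) (hrow : ∀ i, ∑ j, Pm i j = 1) :
    ∃ f0 fT : Fin N → ℝ, (∀ i, 0 < f0 i) ∧ (∀ j, 0 < fT j) ∧
      (∀ i, ∑ j, Pm i j * fT j / f0 i = 1) ∧
      (∀ j, ∑ i, Pm i j * fT j / f0 i = 1) ∧
      (∀ g0 gT : Fin N → ℝ, (∀ i, 0 < g0 i) → (∀ j, 0 < gT j) →
        (∀ i, ∑ j, Pm i j * gT j / g0 i = 1) →
        (∀ j, ∑ i, Pm i j * gT j / g0 i = 1) →
        ∀ i j, Pm i j * gT j / g0 i = Pm i j * fT j / f0 i) := by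
  obtain ⟨f0, fT, hf0, hfT, hr, hc, huniq⟩ := sinkhorn_general Pm (fun _ => 1) (fun _ => 1) hpos
    (fun _ => one_pos) (fun _ => one_pos) rfl
  exact ⟨f0, fT, hf0, hfT, hr, hc, fun g0 gT hg0 _ => huniq g0 gT hg0⟩
end

section
/- Let E_1,…,E_m be n×n complex matrices with Σ_{i=1}^m E_i† E_i = I, let E†(ρ) = Σ_{i=1}^m E_i ρ E_i† be the associated Kraus map with adjoint E(X) = Σ_{i=1}^m E_i† X E_i, and suppose E† is positivity improving. Then the map C on Hermitian positive definite n×n matrices defined by C(X) = (E((E†(X))^{-1}))^{-1} is a strict contraction in the Hilbert projective metric: there exists 0 ≤ λ < 1 such that d_H(C(X), C(Y)) ≤ λ·d_H(X, Y) for all Hermitian positive definite X, Y. -/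
open Matrix
open scoped ComplexOrder

/-- The Hilbert projective metric on Hermitian positive definite `n×n` complex matrices:
`d_H(X,Y) = log(M(X,Y)/m(X,Y))` with `M(X,Y) = inf{λ : λY − X ⪰ 0}` and
`m(X,Y) = sup{λ : X − λY ⪰ 0}`. -/
noncomputable def dHmat {n : ℕ} (X Y : Matrix (Fin n) (Fin n) ℂ) : ℝ :=
  Real.log (sInf {l : ℝ | ((l : ℂ) • Y - X).PosSemidef} /
    sSup {l : ℝ | (X - (l : ℂ) • Y).PosSemidef})

/-!
The map `C` factors as `E†`, inversion, `E`, inversion. Inversion reverses the order, so it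
preserves the Hilbert metric, and positive linear maps never increase it. The strict gain comes from
`E†` through the Birkhoff–Hopf theorem: on the compact set of positive elements of norm one, `E†`
takes values between two positive multiples of the identity, so the image of the cone has finite
projective diameter `Δ`. If `a • y ≤ x ≤ b • y` with optimal `a` and `b`, comparing the images of
the two gaps `x - a • y` and `b • y - x` narrows the bounds on the image of `x`, which contracts
distances by the factor `tanh (Δ / 4) = (k - 1) / (k + 1)`, where `Δ = 2 log k`.
-/

section BirkhoffEstimate

variable {k s t a b : ℝ}

lemma mul_div_add_sub_div_add_le (hk : 1 ≤ k) (hs : 0 ≤ s) (ht : 0 ≤ t) (hst : 0 < s + t) :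
    k * s / (k * s + t) - s / (s + k * t) ≤ (k - 1) / (k + 1) := by
  have hks : 0 < k * s + t := by nlinarith
  have hkt : 0 < s + k * t := by nlinarith
  rw [div_sub_div _ _ hks.ne' hkt.ne', div_le_div_iff₀ (mul_pos hks hkt) (by linarith)]
  have hsq : 0 ≤ (k - 1) * k * (s - t) ^ 2 :=
    mul_nonneg (mul_nonneg (sub_nonneg.2 hk) (zero_le_one.trans hk)) (sq_nonneg _)
  linarith

lemma antitoneOn_log_sub_log_sub_mul_log (hk : 1 ≤ k) (hs : 0 ≤ s) (ht : 0 ≤ t)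
    (hst : 0 < s + t) :
    AntitoneOn (fun x ↦ Real.log (k * s * x + t) - Real.log (s * x + k * t) -
      (k - 1) / (k + 1) * Real.log x) (Set.Ioi 0) := by
  have hsum_pos {x : ℝ} (hx : 0 < x) : 0 < s * x + t := by
    rcases hs.eq_or_lt with rfl | hs
    · simpa using hst
    · positivity
  have hderiv : ∀ x ∈ Set.Ioi (0 : ℝ), HasDerivAt (fun x ↦ Real.log (k * s * x + t) -
      Real.log (s * x + k * t) - (k - 1) / (k + 1) * Real.log x)
      (k * s / (k * s * x + t) - s / (s * x + k * t) - (k - 1) / (k + 1) * x⁻¹) x := by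
    intro x hx
    rw [Set.mem_Ioi] at hx
    have hlin (c d : ℝ) : HasDerivAt (fun x ↦ c * x + d) c x := by
      simpa using ((hasDerivAt_id x).const_mul c).add_const d
    have hpos := hsum_pos hx
    have hsx := mul_nonneg hs hx.le
    exact (((hlin _ _).log (by nlinarith)).sub ((hlin _ _).log (by nlinarith))).sub
      ((Real.hasDerivAt_log hx.ne').const_mul _)
  refine antitoneOn_of_hasDerivWithinAt_nonpos (convex_Ioi 0)
    (fun x hx ↦ (hderiv x hx).continuousAt.continuousWithinAt)
    (fun x hx ↦ (hderiv x (interior_subset hx)).hasDerivWithinAt) fun x hx ↦ ?_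
  have hx : 0 < x := interior_subset hx
  rw [sub_nonpos, ← div_eq_mul_inv, le_div_iff₀ hx]
  calc (k * s / (k * s * x + t) - s / (s * x + k * t)) * x
      = k * (s * x) / (k * (s * x) + t) - s * x / (s * x + k * t) := by ring_nf
    _ ≤ (k - 1) / (k + 1) :=
      mul_div_add_sub_div_add_le hk (mul_nonneg hs hx.le) ht (hsum_pos hx)

lemma log_weighted_div_le_mul_log_div (hk : 1 ≤ k) (hs : 0 ≤ s) (ht : 0 ≤ t) (hst : 0 < s + t)
    (ha : 0 < a) (hab : a ≤ b) :
    Real.log (((k * s * b + t * a) / (k * s + t)) / ((s * b + k * t * a) / (s + k * t))) ≤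
      (k - 1) / (k + 1) * Real.log (b / a) := by
  have hba : 1 ≤ b / a := (one_le_div ha).2 hab
  have hanti := antitoneOn_log_sub_log_sub_mul_log hk hs ht hst (Set.mem_Ioi.2 one_pos)
    (Set.mem_Ioi.2 (one_pos.trans_le hba)) hba
  simp only [mul_one, Real.log_one, mul_zero, sub_zero] at hanti
  have hks : 0 < k * s + t := by nlinarith
  have hkt : 0 < s + k * t := by nlinarith
  have hnum : 0 < k * s * (b / a) + t := by nlinarith [mul_nonneg (by linarith : 0 ≤ k) hs]
  have hden : 0 < s * (b / a) + k * t := by nlinarith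
  have hratio : ((k * s * b + t * a) / (k * s + t)) / ((s * b + k * t * a) / (s + k * t)) =
      ((k * s * (b / a) + t) / (s * (b / a) + k * t)) / ((k * s + t) / (s + k * t)) := by
    field_simp
  rw [hratio, Real.log_div (by positivity) (by positivity), Real.log_div hnum.ne' hden.ne',
    Real.log_div hks.ne' hkt.ne']
  linarith

end BirkhoffEstimate

section HilbertDist

/-- The Hilbert projective metric of the positive cone of an ordered real vector space,
`log (M(x, y) / m(x, y))` with `M(x, y) = inf {l | x ≤ l y}` and `m(x, y) = sup {l | l y ≤ x}`.
It is meaningful for `ConeComparable` vectors only. -/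
noncomputable def hilbertDist {V : Type*} [LE V] [SMul ℝ V] (x y : V) : ℝ :=
  Real.log (sInf {l : ℝ | x ≤ l • y} / sSup {l : ℝ | l • y ≤ x})

/-- Two vectors lie in the same part of the positive cone: each is bounded above and below by
positive multiples of the other. -/
def ConeComparable {V : Type*} [LE V] [SMul ℝ V] (x y : V) : Prop :=
  ∃ a b : ℝ, 0 < a ∧ 0 < b ∧ a • y ≤ x ∧ x ≤ b • y

/-- The image of the positive cone under `T` has projective diameter at most `2 log k`. For
nonzero `p, q ≥ 0` this says that `k⁻¹ μ T q ≤ T p ≤ k μ T q` for some `μ > 0`; writing `μ = s / t`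
and clearing denominators lets `p` or `q` vanish. -/
def ProjectivelyBounded {V W : Type*} [AddCommGroup V] [PartialOrder V] [Module ℝ V]
    [AddCommGroup W] [PartialOrder W] [Module ℝ W] (k : ℝ) (T : V →ₗ[ℝ] W) : Prop :=
  ∀ p q : V, 0 ≤ p → 0 ≤ q → ∃ s t : ℝ, 0 ≤ s ∧ 0 ≤ t ∧ 0 < s + t ∧
    s • T q ≤ (k * t) • T p ∧ t • T p ≤ (k * s) • T q

section Basic

variable {V : Type*} [AddCommGroup V] [PartialOrder V] [Module ℝ V] {x y z : V} {a b : ℝ}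

lemma hilbertDist_zero : hilbertDist (0 : V) 0 = 0 := by
  simp [hilbertDist]

variable [IsStrictOrderedModule ℝ V]

lemma ConeComparable.symm (h : ConeComparable x y) : ConeComparable y x := by
  obtain ⟨a, b, ha, hb, hax, hxb⟩ := h
  exact ⟨b⁻¹, a⁻¹, inv_pos.2 hb, inv_pos.2 ha,
    (inv_smul_le_iff_of_pos hb).2 hxb, (le_inv_smul_iff_of_pos ha).2 hax⟩

lemma ConeComparable.trans (hxy : ConeComparable x y) (hyz : ConeComparable y z) :
    ConeComparable x z := by
  obtain ⟨a, b, ha, hb, hax, hxb⟩ := hxy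
  obtain ⟨c, d, hc, hd, hcy, hyd⟩ := hyz
  refine ⟨a * c, b * d, mul_pos ha hc, mul_pos hb hd, ?_, ?_⟩
  · rw [mul_smul]
    exact (smul_le_smul_of_nonneg_left hcy ha.le).trans hax
  · rw [mul_smul]
    exact hxb.trans (smul_le_smul_of_nonneg_left hyd hb.le)

variable [IsOrderedAddMonoid V]

lemma le_of_smul_le_of_le_smul (hy : 0 < y) (hax : a • y ≤ x) (hxb : x ≤ b • y) : a ≤ b :=
  (smul_le_smul_iff_of_pos_right hy).1 (hax.trans hxb)

lemma hilbertDist_le_log_div (hy : 0 ≤ y) (ha : 0 < a) (hab : a ≤ b) (hax : a • y ≤ x)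
    (hxb : x ≤ b • y) : hilbertDist x y ≤ Real.log (b / a) := by
  rcases hy.eq_or_lt with rfl | hy
  · obtain rfl : x = 0 := le_antisymm (by simpa using hxb) (by simpa using hax)
    rw [hilbertDist_zero]
    exact Real.log_nonneg ((one_le_div ha).2 hab)
  have hM_ge : a ≤ sInf {l : ℝ | x ≤ l • y} :=
    le_csInf ⟨b, hxb⟩ fun l hl ↦ le_of_smul_le_of_le_smul hy hax hl
  have hM_le : sInf {l : ℝ | x ≤ l • y} ≤ b :=
    csInf_le ⟨a, fun l hl ↦ le_of_smul_le_of_le_smul hy hax hl⟩ hxb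
  have hm_ge : a ≤ sSup {l : ℝ | l • y ≤ x} :=
    le_csSup ⟨b, fun l hl ↦ le_of_smul_le_of_le_smul hy hl hxb⟩ hax
  exact Real.log_le_log (div_pos (ha.trans_le hM_ge) (ha.trans_le hm_ge))
    (div_le_div₀ (ha.le.trans hab) hM_le ha hm_ge)

lemma ConeComparable.exists_hilbertDist_eq_log_div [TopologicalSpace V] [OrderClosedTopology V]
    [ContinuousSMul ℝ V] (h : ConeComparable x y) (hy : 0 ≤ y) :
    ∃ a b : ℝ, 0 < a ∧ a ≤ b ∧ a • y ≤ x ∧ x ≤ b • y ∧ hilbertDist x y = Real.log (b / a) := by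
  obtain ⟨a, b, ha, -, hax, hxb⟩ := h
  rcases hy.eq_or_lt with rfl | hy
  · obtain rfl : x = 0 := le_antisymm (by simpa using hxb) (by simpa using hax)
    exact ⟨1, 1, by simp [hilbertDist_zero]⟩
  have hM : sInf {l : ℝ | x ≤ l • y} ∈ {l : ℝ | x ≤ l • y} :=
    (isClosed_le continuous_const (by fun_prop)).csInf_mem ⟨b, hxb⟩
      ⟨a, fun l hl ↦ le_of_smul_le_of_le_smul hy hax hl⟩
  have hm_bdd : BddAbove {l : ℝ | l • y ≤ x} := ⟨b, fun l hl ↦ le_of_smul_le_of_le_smul hy hl hxb⟩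
  have hm : sSup {l : ℝ | l • y ≤ x} ∈ {l : ℝ | l • y ≤ x} :=
    (isClosed_le (by fun_prop) continuous_const).csSup_mem ⟨a, hax⟩ hm_bdd
  exact ⟨_, _, ha.trans_le (le_csSup hm_bdd hax), le_of_smul_le_of_le_smul hy hm hM, hm, hM, rfl⟩

end Basic

section Map

variable {V W : Type*}
  [AddCommGroup V] [PartialOrder V] [IsOrderedAddMonoid V] [Module ℝ V] [IsStrictOrderedModule ℝ V]
  [TopologicalSpace V] [OrderClosedTopology V] [ContinuousSMul ℝ V]
  [AddCommGroup W] [PartialOrder W] [IsOrderedAddMonoid W] [Module ℝ W] [IsStrictOrderedModule ℝ W]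
  {x y : V}

lemma ConeComparable.hilbertDist_map_le (h : ConeComparable x y) (hy : 0 ≤ y) (f : V →ₚ[ℝ] W) :
    hilbertDist (f x) (f y) ≤ hilbertDist x y := by
  obtain ⟨a, b, ha, hab, hax, hxb, hdist⟩ := h.exists_hilbertDist_eq_log_div hy
  rw [hdist]
  refine hilbertDist_le_log_div (f.map_nonneg hy) ha hab ?_ ?_
  · simpa only [map_smul] using OrderHomClass.mono f hax
  · simpa only [map_smul] using OrderHomClass.mono f hxb

theorem ConeComparable.hilbertDist_map_le_mul (h : ConeComparable x y) (hy : 0 ≤ y)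
    {T : V →ₗ[ℝ] W} {k : ℝ} (hk : 1 ≤ k) (hT : ProjectivelyBounded k T) (hTy : 0 ≤ T y) :
    hilbertDist (T x) (T y) ≤ (k - 1) / (k + 1) * hilbertDist x y := by
  obtain ⟨a, b, ha, hab, hax, hxb, hdist⟩ := h.exists_hilbertDist_eq_log_div hy
  obtain ⟨s, t, hs, ht, hst, hst_le, hts_le⟩ :=
    hT (x - a • y) (b • y - x) (sub_nonneg.2 hax) (sub_nonneg.2 hxb)
  rw [map_sub, map_sub, map_smul, map_smul] at hst_le hts_le
  have hks : 0 < k * s + t := by nlinarith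
  have hkt : 0 < s + k * t := by nlinarith
  have hlower : ((s * b + k * t * a) / (s + k * t)) • T y ≤ T x := by
    rw [div_eq_inv_mul, mul_smul, inv_smul_le_iff_of_pos hkt, ← sub_nonneg]
    convert! sub_nonneg.2 hst_le using 1
    module
  have hupper : T x ≤ ((k * s * b + t * a) / (k * s + t)) • T y := by
    rw [div_eq_inv_mul, mul_smul, le_inv_smul_iff_of_pos hks, ← sub_nonneg]
    convert! sub_nonneg.2 hts_le using 1
    module
  have hratio : (s * b + k * t * a) / (s + k * t) ≤ (k * s * b + t * a) / (k * s + t) := by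
    rw [div_le_div_iff₀ hkt hks]
    have hgap : 0 ≤ (k ^ 2 - 1) * (s * t) * (b - a) :=
      mul_nonneg (mul_nonneg (sub_nonneg.2 (one_le_pow₀ hk)) (mul_nonneg hs ht)) (sub_nonneg.2 hab)
    linarith
  have hlower_pos : 0 < s * b + k * t * a := by nlinarith
  rw [hdist]
  exact (hilbertDist_le_log_div hTy (div_pos hlower_pos hkt) hratio hlower hupper).trans
    (log_weighted_div_le_mul_log_div hk hs ht hst ha hab)

end Map

end HilbertDist

section StrictlyPositive

open scoped Ring

lemma ringInverse_smul {𝕜 R : Type*} [Field 𝕜] [Ring R] [Algebra 𝕜 R] {c : 𝕜} (hc : c ≠ 0)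
    (x : R) : (c • x)⁻¹ʳ = c⁻¹ • x⁻¹ʳ := by
  have hunit : IsUnit (algebraMap 𝕜 R c) := (isUnit_iff_ne_zero.2 hc).map _
  rw [Algebra.smul_def, Ring.inverse_mul (.inl hunit), eq_comm,
    Ring.eq_mul_inverse_iff_mul_eq _ _ _ hunit, ← Algebra.commutes, ← Algebra.smul_def,
    smul_inv_smul₀ hc]

variable {A B A' : Type*}
  [CStarAlgebra A] [PartialOrder A] [StarOrderedRing A]
  [CStarAlgebra B] [PartialOrder B] [StarOrderedRing B]
  [CStarAlgebra A'] [PartialOrder A'] [StarOrderedRing A']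

lemma le_smul_one_of_norm_le {a : A} {M : ℝ} (ha : 0 ≤ a) (hM : ‖a‖ ≤ M) : a ≤ M • 1 := by
  rw [← Algebra.algebraMap_eq_smul_one]
  exact (IsSelfAdjoint.le_algebraMap_norm_self (.of_nonneg ha)).trans
    (algebraMap_mono A hM)

lemma inv_smul_one_le_of_norm_ringInverse_le {a : A} {M : ℝ} (ha : IsStrictlyPositive a)
    (hM : 0 < M) (haM : ‖a⁻¹ʳ‖ ≤ M) : M⁻¹ • 1 ≤ a := by
  have hle := CStarAlgebra.ringInverse_le_ringInverse
    (le_smul_one_of_norm_le ha.ringInverse.nonneg haM) ha.ringInverse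
  rwa [Ring.inverse_inverse ha.isUnit, ringInverse_smul hM.ne', Ring.inverse_one] at hle

lemma coneComparable_one_right {a : A} (ha : IsStrictlyPositive a) : ConeComparable a 1 := by
  have hM : 0 < ‖a⁻¹ʳ‖ + 1 := by positivity
  exact ⟨(‖a⁻¹ʳ‖ + 1)⁻¹, ‖a‖ + 1, by positivity, by positivity,
    inv_smul_one_le_of_norm_ringInverse_le ha hM (by simp),
    le_smul_one_of_norm_le ha.nonneg (by simp)⟩

lemma coneComparable_of_isStrictlyPositive {a b : A} (ha : IsStrictlyPositive a)
    (hb : IsStrictlyPositive b) : ConeComparable a b :=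
  (coneComparable_one_right ha).trans (coneComparable_one_right hb).symm

lemma hilbertDist_ringInverse_le {x y : A} (hx : IsStrictlyPositive x)
    (hy : IsStrictlyPositive y) : hilbertDist x⁻¹ʳ y⁻¹ʳ ≤ hilbertDist x y := by
  obtain ⟨a, b, ha, hab, hax, hxb, hdist⟩ :=
    (coneComparable_of_isStrictlyPositive hx hy).exists_hilbertDist_eq_log_div hy.nonneg
  have hb := ha.trans_le hab
  have hlower := CStarAlgebra.ringInverse_le_ringInverse hxb hx
  have hupper := CStarAlgebra.ringInverse_le_ringInverse hax (hy.smul ha)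
  rw [ringInverse_smul hb.ne'] at hlower
  rw [ringInverse_smul ha.ne'] at hupper
  calc hilbertDist x⁻¹ʳ y⁻¹ʳ ≤ Real.log (a⁻¹ / b⁻¹) :=
        hilbertDist_le_log_div hy.ringInverse.nonneg (inv_pos.2 hb)
          (inv_anti₀ ha hab) hlower hupper
    _ = hilbertDist x y := by rw [hdist, inv_div_inv]

lemma isStrictlyPositive_map_of_map_one (f : A →ₚ[ℝ] B) (hf : IsStrictlyPositive (f 1)) {a : A}
    (ha : IsStrictlyPositive a) : IsStrictlyPositive (f a) := by
  obtain ⟨c, -, hc, -, hca, -⟩ := coneComparable_one_right ha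
  have hle := OrderHomClass.mono f hca
  rw [map_smul] at hle
  exact (hf.smul hc).of_le hle

lemma exists_inv_smul_one_le_le_smul_one_of_isCompact {X : Type*} [TopologicalSpace X] {K : Set X}
    (hK : IsCompact K) {f : X → A} (hf : ContinuousOn f K)
    (hpos : ∀ x ∈ K, IsStrictlyPositive (f x)) :
    ∃ k : ℝ, 1 ≤ k ∧ ∀ x ∈ K, k⁻¹ • 1 ≤ f x ∧ f x ≤ k • 1 := by
  have hinv : ContinuousOn (Ring.inverse ∘ f) K := fun x hx ↦
    ContinuousAt.comp_continuousWithinAt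
      (NormedRing.inverse_continuousAt (hpos x hx).isUnit.unit) (hf x hx)
  obtain ⟨M, hM⟩ := hK.exists_bound_of_continuousOn hf
  obtain ⟨N, hN⟩ := hK.exists_bound_of_continuousOn hinv
  have hk : 1 ≤ max 1 (max M N) := le_max_left _ _
  refine ⟨max 1 (max M N), hk, fun x hx ↦ ⟨?_, ?_⟩⟩
  · exact inv_smul_one_le_of_norm_ringInverse_le (hpos x hx) (one_pos.trans_le hk)
      ((hN x hx).trans (by simp))
  · exact le_smul_one_of_norm_le (hpos x hx).nonneg ((hM x hx).trans (by simp))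

section FiniteDiameter

variable {V : Type*} [NormedAddCommGroup V] [PartialOrder V] [OrderClosedTopology V]
  [NormedSpace ℝ V] [IsStrictOrderedModule ℝ V] [FiniteDimensional ℝ V] {T : V →ₗ[ℝ] A}

lemma exists_norm_smul_one_le_map_le_norm_smul_one (hT : ∀ p, 0 < p → IsStrictlyPositive (T p)) :
    ∃ k : ℝ, 1 ≤ k ∧ ∀ p, 0 ≤ p → (k⁻¹ * ‖p‖) • 1 ≤ T p ∧ T p ≤ (k * ‖p‖) • 1 := by
  have hcompact : IsCompact (Metric.sphere (0 : V) 1 ∩ Set.Ici 0) :=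
    (isCompact_sphere 0 1).inter_right isClosed_Ici
  obtain ⟨k, hk, hbound⟩ := exists_inv_smul_one_le_le_smul_one_of_isCompact hcompact
    T.continuous_of_finiteDimensional.continuousOn fun p hp ↦
      hT p (hp.2.lt_of_ne (ne_zero_of_mem_unit_sphere ⟨p, hp.1⟩).symm)
  refine ⟨k, hk, fun p hp ↦ ?_⟩
  rcases eq_or_ne p 0 with rfl | hp0
  · simp
  have hnorm : 0 < ‖p‖ := norm_pos_iff.2 hp0
  have hmem : ‖p‖⁻¹ • p ∈ Metric.sphere (0 : V) 1 ∩ Set.Ici 0 :=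
    ⟨by simp [norm_smul, hp0], smul_nonneg (by positivity) hp⟩
  obtain ⟨hlower, hupper⟩ := hbound _ hmem
  rw [map_smul] at hlower hupper
  rw [le_inv_smul_iff_of_pos hnorm, smul_smul] at hlower
  rw [inv_smul_le_iff_of_pos hnorm, smul_smul] at hupper
  exact ⟨mul_comm k⁻¹ ‖p‖ ▸ hlower, mul_comm k ‖p‖ ▸ hupper⟩

lemma exists_projectivelyBounded (hT : ∀ p, 0 < p → IsStrictlyPositive (T p)) :
    ∃ k : ℝ, 1 ≤ k ∧ ProjectivelyBounded k T := by
  obtain ⟨k, hk, hbound⟩ := exists_norm_smul_one_le_map_le_norm_smul_one hT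
  have hk0 : k ≠ 0 := (one_pos.trans_le hk).ne'
  have hle {p q : V} (hp : 0 ≤ p) (hq : 0 ≤ q) : ‖p‖ • T q ≤ (k ^ 2 * ‖q‖) • T p :=
    calc ‖p‖ • T q ≤ ‖p‖ • (k * ‖q‖) • 1 := by gcongr; exact (hbound q hq).2
      _ = (k ^ 2 * ‖q‖) • (k⁻¹ * ‖p‖) • 1 := by
        rw [smul_smul, smul_smul]; congr 1; field_simp [hk0]
      _ ≤ (k ^ 2 * ‖q‖) • T p := by gcongr; exact (hbound p hp).1
  refine ⟨k ^ 2, one_le_pow₀ hk, fun p q hp hq ↦ ?_⟩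
  by_cases hpq : p = 0 ∧ q = 0
  · exact ⟨1, 1, by simp [hpq]⟩
  refine ⟨‖p‖, ‖q‖, norm_nonneg p, norm_nonneg q, ?_, hle hp hq, hle hq hp⟩
  contrapose! hpq
  exact ⟨norm_le_zero_iff.1 (by linarith [norm_nonneg q]),
    norm_le_zero_iff.1 (by linarith [norm_nonneg p])⟩

end FiniteDiameter

theorem exists_hilbertDist_ringInverse_map_le_mul [FiniteDimensional ℝ A] {Φ : A →ₗ[ℝ] B}
    (hΦ : ∀ p, 0 < p → IsStrictlyPositive (Φ p)) {Ψ : B →ₚ[ℝ] A'}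
    (hΨ : IsStrictlyPositive (Ψ 1)) :
    ∃ lam : ℝ, 0 ≤ lam ∧ lam < 1 ∧ ∀ x y : A, IsStrictlyPositive x → IsStrictlyPositive y →
      hilbertDist (Ψ (Φ x)⁻¹ʳ)⁻¹ʳ (Ψ (Φ y)⁻¹ʳ)⁻¹ʳ ≤ lam * hilbertDist x y := by
  obtain ⟨k, hk, hbounded⟩ := exists_projectivelyBounded hΦ
  refine ⟨(k - 1) / (k + 1), div_nonneg (by linarith) (by linarith),
    (div_lt_one (by linarith)).2 (by linarith), fun x y hx hy ↦ ?_⟩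
  cases subsingleton_or_nontrivial A with
  | inl _ => simp [Subsingleton.elim x 0, Subsingleton.elim y 0, hilbertDist_zero]
  | inr _ =>
    have hΦx := hΦ x (hx.nonneg.lt_of_ne hx.isUnit.ne_zero.symm)
    have hΦy := hΦ y (hy.nonneg.lt_of_ne hy.isUnit.ne_zero.symm)
    calc hilbertDist (Ψ (Φ x)⁻¹ʳ)⁻¹ʳ (Ψ (Φ y)⁻¹ʳ)⁻¹ʳ
        ≤ hilbertDist (Ψ (Φ x)⁻¹ʳ) (Ψ (Φ y)⁻¹ʳ) :=
          hilbertDist_ringInverse_le (isStrictlyPositive_map_of_map_one Ψ hΨ hΦx.ringInverse)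
            (isStrictlyPositive_map_of_map_one Ψ hΨ hΦy.ringInverse)
      _ ≤ hilbertDist (Φ x)⁻¹ʳ (Φ y)⁻¹ʳ :=
          (coneComparable_of_isStrictlyPositive hΦx.ringInverse hΦy.ringInverse).hilbertDist_map_le
            hΦy.ringInverse.nonneg Ψ
      _ ≤ hilbertDist (Φ x) (Φ y) := hilbertDist_ringInverse_le hΦx hΦy
      _ ≤ (k - 1) / (k + 1) * hilbertDist x y :=
          (coneComparable_of_isStrictlyPositive hx hy).hilbertDist_map_le_mul hy.nonneg hk
            hbounded hΦy.nonneg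

end StrictlyPositive

section KrausMap

open scoped Ring MatrixOrder Matrix.Norms.L2Operator

variable {m n ι : Type*} [Fintype m] [Fintype n] [Fintype ι]

lemma dHmat_eq_hilbertDist {n : ℕ} (X Y : Matrix (Fin n) (Fin n) ℂ) :
    dHmat X Y = hilbertDist X Y := by
  simp only [dHmat, hilbertDist, Matrix.le_iff, Complex.coe_smul]

/-- The completely positive map `X ↦ ∑ i, E i * X * (E i)ᴴ` with Kraus operators `E i`, as a
positive linear map. Its adjoint for the trace pairing is the map with Kraus operators
`(E i)ᴴ`. -/
noncomputable def krausMap (E : ι → Matrix m n ℂ) : Matrix n n ℂ →ₚ[ℝ] Matrix m m ℂ :=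
  .mk₀
    { toFun := fun X ↦ ∑ i, E i * X * (E i)ᴴ
      map_add' := fun X Y ↦ by simp only [Matrix.mul_add, Matrix.add_mul, Finset.sum_add_distrib]
      map_smul' := fun c X ↦ by
        simp only [Matrix.mul_smul, Matrix.smul_mul, Finset.smul_sum, RingHom.id_apply] }
    fun _ hX ↦ (Matrix.posSemidef_sum _ fun i _ ↦
      hX.posSemidef.mul_mul_conjTranspose_same (E i)).nonneg

lemma krausMap_apply (E : ι → Matrix m n ℂ) (X : Matrix n n ℂ) :
    krausMap E X = ∑ i, E i * X * (E i)ᴴ := rfl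

lemma trace_krausMap_mul (E : ι → Matrix m n ℂ) (X : Matrix n n ℂ) (Y : Matrix m m ℂ) :
    (krausMap E X * Y).trace = (X * krausMap (fun i ↦ (E i)ᴴ) Y).trace := by
  simp only [krausMap_apply, Finset.sum_mul, Finset.mul_sum, Matrix.trace_sum,
    conjTranspose_conjTranspose]
  refine Finset.sum_congr rfl fun i _ ↦ ?_
  rw [Matrix.mul_assoc, Matrix.mul_assoc, Matrix.trace_mul_comm]
  simp only [Matrix.mul_assoc]

lemma posDef_krausMap_conjTranspose_one [DecidableEq m] [Nonempty m] {E : ι → Matrix m n ℂ}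
    (hE : ∀ X : Matrix n n ℂ, X.PosSemidef → X ≠ 0 → (krausMap E X).PosDef) :
    (krausMap (fun i ↦ (E i)ᴴ) 1).PosDef := by
  have hnonneg : 0 ≤ krausMap (fun i ↦ (E i)ᴴ) 1 := PositiveLinearMap.map_nonneg _ zero_le_one
  refine .of_dotProduct_mulVec_pos hnonneg.posSemidef.isHermitian fun v hv ↦ ?_
  have htrace : 0 < (krausMap E (vecMulVec v (star v))).trace :=
    (hE _ (posSemidef_vecMulVec_self_star v) (by simpa using hv)).trace_pos
  rwa [← Matrix.mul_one (krausMap E _), trace_krausMap_mul, vecMulVec_mul, trace_vecMulVec,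
    dotProduct_comm, ← dotProduct_mulVec] at htrace

theorem kraus_composition_strict_contraction_general [DecidableEq n] (E : ι → Matrix n n ℂ)
    (himp : ∀ ρ : Matrix n n ℂ, ρ.PosSemidef → ρ ≠ 0 → (∑ i, E i * ρ * (E i)ᴴ).PosDef) :
    ∃ lam : ℝ, 0 ≤ lam ∧ lam < 1 ∧ ∀ X Y : Matrix n n ℂ, X.PosDef → Y.PosDef →
      hilbertDist ((∑ i, (E i)ᴴ * (∑ k, E k * X * (E k)ᴴ)⁻¹ * E i)⁻¹)
          ((∑ i, (E i)ᴴ * (∑ k, E k * Y * (E k)ᴴ)⁻¹ * E i)⁻¹)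
        ≤ lam * hilbertDist X Y := by
  have hΦ (p : Matrix n n ℂ) (hp : 0 < p) : IsStrictlyPositive (krausMap E p) :=
    (himp p hp.le.posSemidef hp.ne').isStrictlyPositive
  have hΨ : IsStrictlyPositive (krausMap (fun i ↦ (E i)ᴴ) 1) := by
    cases isEmpty_or_nonempty n with
    | inl _ => exact .of_subsingleton
    | inr _ => exact (posDef_krausMap_conjTranspose_one himp).isStrictlyPositive
  obtain ⟨lam, hlam0, hlam1, hle⟩ := exists_hilbertDist_ringInverse_map_le_mul
    (Φ := (krausMap E).toLinearMap) hΦ hΨ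
  refine ⟨lam, hlam0, hlam1, fun X Y hX hY ↦ ?_⟩
  simpa [krausMap_apply, Matrix.nonsing_inv_eq_ringInverse] using
    hle X Y hX.isStrictlyPositive hY.isStrictlyPositive

end KrausMap

/-- For a positivity-improving Kraus map `E†(ρ) = Σ_i E_i ρ E_i†` with adjoint
`E(X) = Σ_i E_i† X E_i`, the map `C(X) = (E((E†(X))⁻¹))⁻¹` on Hermitian positive definite
matrices is a strict contraction in the Hilbert projective metric. -/
theorem kraus_composition_strict_contraction {n m : ℕ}
    (E : Fin m → Matrix (Fin n) (Fin n) ℂ)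
    (hsum : ∑ i, (E i)ᴴ * E i = 1)
    (himp : ∀ ρ : Matrix (Fin n) (Fin n) ℂ, ρ.PosSemidef → ρ ≠ 0 →
      (∑ i, E i * ρ * (E i)ᴴ).PosDef) :
    ∃ lam : ℝ, 0 ≤ lam ∧ lam < 1 ∧
      ∀ X Y : Matrix (Fin n) (Fin n) ℂ, X.PosDef → Y.PosDef →
        dHmat ((∑ i, (E i)ᴴ * (∑ k, E k * X * (E k)ᴴ)⁻¹ * E i)⁻¹)
            ((∑ i, (E i)ᴴ * (∑ k, E k * Y * (E k)ᴴ)⁻¹ * E i)⁻¹)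
          ≤ lam * dHmat X Y := by
  simpa only [dHmat_eq_hilbertDist] using kraus_composition_strict_contraction_general E himp
end
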